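/- Asymptotic intersection method, part (1): Let (Ω, 𝓐, P) be a probability space, let L_{1,n}, U_{1,n}, L_{2,n}, U_{2,n} (n ∈ ℕ) be sequences of real random variables, let θ₁, θ₂ be real numbers, and let α₁, α₂, α ∈ [0,1] with α₁ + α₂ ≤ α. If liminf_{n→∞} P({ω : L_{k,n}(ω) ≤ θ_k ≤ U_{k,n}(ω)}) ≥ 1 − α_k for k = 1, 2, then liminf_{n→∞} P({ω : L_{1,n}(ω) − U_{2,n}(ω) ≤ θ₁ − θ₂ ≤ U_{1,n}(ω) − L_{2,n}(ω)}) ≥ 1 − α. Since the hypotheses concern only the marginal coverage of each interval, the bound holds under arbitrary dependence between the two sequences of intervals; applied to asymptotic interval endpoints it gives the asymptotic intersection method, and applied to bootstrap interval endpoints it gives the bootstrap intersection method. -/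

import Mathlib

open MeasureTheory Filter

/-!
When both intervals cover their parameters, subtracting the endpoint inequalities shows that the
difference interval covers the difference. Whatever the dependence between the intervals, the joint
coverage event satisfies Fréchet's bound `P A + P B ≤ P (A ∩ B) + 1`, and this bound survives the
passage to the limit because `liminf` is superadditive.
-/

open scoped ENNReal

-- Mathlib's `le_liminf_add` is about ordered additive groups, so it does not cover `ℝ≥0∞`.
theorem liminf_add_liminf_le_liminf_add {ι : Type*} (l : Filter ι) (u v : ι → ℝ≥0∞) :
    liminf u l + liminf v l ≤ liminf (fun i => u i + v i) l := by
  rw [liminf_eq (u := u), liminf_eq (u := v), sSup_eq_iSup, sSup_eq_iSup]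
  refine ENNReal.biSup_add_biSup_le' ⟨0, by simp⟩ ⟨0, by simp⟩ fun a ha b hb => ?_
  refine le_liminf_of_le (by isBoundedDefault) ?_
  filter_upwards [ha, hb] with i hai hbi using add_le_add hai hbi

theorem measure_add_measure_le_measure_inter_add_measure_univ {Ω : Type*} [MeasurableSpace Ω]
    (μ : Measure Ω) (s : Set Ω) {t : Set Ω} (ht : NullMeasurableSet t μ) :
    μ s + μ t ≤ μ (s ∩ t) + μ Set.univ := by
  rw [← measure_union_add_inter₀ s ht, add_comm]
  gcongr
  exact Set.subset_univ _

theorem ofReal_one_sub_le_of_add_le_add_one {α₁ α₂ α : ℝ} {p q r : ℝ≥0∞}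
    (hsum : α₁ + α₂ ≤ α) (hp : ENNReal.ofReal (1 - α₁) ≤ p) (hq : ENNReal.ofReal (1 - α₂) ≤ q)
    (hpq : p + q ≤ r + 1) : ENNReal.ofReal (1 - α) ≤ r := by
  rcases le_total 1 α with hα | hα
  · simp [ENNReal.ofReal_of_nonpos (sub_nonpos.2 hα)]
  refine (ENNReal.add_le_add_iff_right ENNReal.one_ne_top).1 ?_
  calc ENNReal.ofReal (1 - α) + 1
      = ENNReal.ofReal (1 - α + 1) := by
        rw [ENNReal.ofReal_add (sub_nonneg.2 hα) zero_le_one, ENNReal.ofReal_one]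
    _ ≤ ENNReal.ofReal ((1 - α₁) + (1 - α₂)) := ENNReal.ofReal_le_ofReal (by linarith)
    _ ≤ ENNReal.ofReal (1 - α₁) + ENNReal.ofReal (1 - α₂) := ENNReal.ofReal_add_le
    _ ≤ p + q := add_le_add hp hq
    _ ≤ r + 1 := hpq

section TriangularArray

variable {ι : Type*} {l : Filter ι} [l.NeBot] {Ω : ι → Type*} [∀ i, MeasurableSpace (Ω i)]
  (P : ∀ i, Measure (Ω i)) [∀ i, IsProbabilityMeasure (P i)]

theorem liminf_measure_add_liminf_measure_le (s : ∀ i, Set (Ω i)) {t : ∀ i, Set (Ω i)}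
    (ht : ∀ i, NullMeasurableSet (t i) (P i)) :
    liminf (fun i => P i (s i)) l + liminf (fun i => P i (t i)) l ≤
      liminf (fun i => P i (s i ∩ t i)) l + 1 :=
  calc liminf (fun i => P i (s i)) l + liminf (fun i => P i (t i)) l
      ≤ liminf (fun i => P i (s i) + P i (t i)) l := liminf_add_liminf_le_liminf_add l _ _
    _ ≤ liminf (fun i => P i (s i ∩ t i) + 1) l := liminf_le_liminf <| .of_forall fun i => by
        simpa only [measure_univ] using
          measure_add_measure_le_measure_inter_add_measure_univ (P i) (s i) (ht i)
    _ = liminf (fun i => P i (s i ∩ t i)) l + 1 :=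
        liminf_add_const l _ 1 (by isBoundedDefault) (by isBoundedDefault)

theorem asymptotic_intersection_method_part1_general
    {G : Type*} [AddCommGroup G] [Preorder G] [AddLeftMono G]
    (L₁ U₁ L₂ U₂ : ∀ i, Ω i → G) (θ₁ θ₂ : G)
    (hmeas : ∀ i, NullMeasurableSet {ω | L₂ i ω ≤ θ₂ ∧ θ₂ ≤ U₂ i ω} (P i))
    {α₁ α₂ α : ℝ} (hsum : α₁ + α₂ ≤ α)
    (h₁ : ENNReal.ofReal (1 - α₁) ≤
      liminf (fun i => P i {ω | L₁ i ω ≤ θ₁ ∧ θ₁ ≤ U₁ i ω}) l)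
    (h₂ : ENNReal.ofReal (1 - α₂) ≤
      liminf (fun i => P i {ω | L₂ i ω ≤ θ₂ ∧ θ₂ ≤ U₂ i ω}) l) :
    ENNReal.ofReal (1 - α) ≤
      liminf (fun i =>
        P i {ω | L₁ i ω - U₂ i ω ≤ θ₁ - θ₂ ∧ θ₁ - θ₂ ≤ U₁ i ω - L₂ i ω}) l := by
  have joint_coverage := ofReal_one_sub_le_of_add_le_add_one hsum h₁ h₂
    (liminf_measure_add_liminf_measure_le P _ hmeas)
  refine joint_coverage.trans (liminf_le_liminf (.of_forall fun i => measure_mono ?_))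
  rintro ω ⟨⟨hL₁, hU₁⟩, hL₂, hU₂⟩
  exact ⟨sub_le_sub hL₁ hU₂, sub_le_sub hU₁ hL₂⟩

end TriangularArray

/-- Asymptotic intersection method, part (1): if the marginal
confidence intervals have asymptotic coverage (in the liminf sense) at least
`1 - α₁` and `1 - α₂`, and `α₁ + α₂ ≤ α`, then the intersection interval for the
difference has asymptotic coverage at least `1 - α`, under arbitrary dependence. -/
theorem asymptotic_intersection_method_part1
    {Ω : Type*} [MeasurableSpace Ω] (P : Measure Ω) [IsProbabilityMeasure P]
    (L₁ U₁ L₂ U₂ : ℕ → Ω → ℝ)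
    (hL₁ : ∀ n, Measurable (L₁ n)) (hU₁ : ∀ n, Measurable (U₁ n))
    (hL₂ : ∀ n, Measurable (L₂ n)) (hU₂ : ∀ n, Measurable (U₂ n))
    (θ₁ θ₂ α₁ α₂ α : ℝ)
    (hα₁ : α₁ ∈ Set.Icc (0 : ℝ) 1) (hα₂ : α₂ ∈ Set.Icc (0 : ℝ) 1)
    (hα : α ∈ Set.Icc (0 : ℝ) 1) (hsum : α₁ + α₂ ≤ α)
    (h₁ : ENNReal.ofReal (1 - α₁) ≤
      liminf (fun n => P {ω | L₁ n ω ≤ θ₁ ∧ θ₁ ≤ U₁ n ω}) atTop)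
    (h₂ : ENNReal.ofReal (1 - α₂) ≤
      liminf (fun n => P {ω | L₂ n ω ≤ θ₂ ∧ θ₂ ≤ U₂ n ω}) atTop) :
    ENNReal.ofReal (1 - α) ≤
      liminf (fun n =>
        P {ω | L₁ n ω - U₂ n ω ≤ θ₁ - θ₂ ∧ θ₁ - θ₂ ≤ U₁ n ω - L₂ n ω}) atTop :=
  asymptotic_intersection_method_part1_general (fun _ => P) L₁ U₁ L₂ U₂ θ₁ θ₂
    (fun n => ((hL₂ n measurableSet_Iic).inter (hU₂ n measurableSet_Ici)).nullMeasurableSet)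
    hsum h₁ h₂
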